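/- Let Q be a tree quiver, V a representation of Q over a field K, and x₀ a fixed vertex. Let Hom(𝟙,V) = { (v_x)_{x∈Q₀} ∈ Π_x V_x : V_a(v_{ta}) = v_{ha} for all arrows a } and Hom(V,𝟙) = { (g_x)_{x∈Q₀} with g_x ∈ V_x^* : g_{ha}∘V_a = g_{ta} for all arrows a }. Define the linear map η : Hom(𝟙,V) → Hom(V,𝟙)^* by η((v_x))((g_x)) = g_{x₀}(v_{x₀}) (this value is independent of the choice of x₀). Then rank η = dim_K (rkf V)_{x₀}. -/

import Mathlib

open Submodule

section Defs

variable {K : Type} [Field K]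
variable {Q₀ Q₁ : Type} (tl hd : Q₁ → Q₀)
variable (Vx : Q₀ → Type) [∀ x, AddCommGroup (Vx x)] [∀ x, Module K (Vx x)]
variable (Va : ∀ a : Q₁, Vx (tl a) →ₗ[K] Vx (hd a))

/-- `U` is a subrepresentation of the representation `(Vx, Va)`. -/
def IsSubrep (U : ∀ x, Submodule K (Vx x)) : Prop :=
  ∀ a : Q₁, (U (tl a)).map (Va a) ≤ U (hd a)

/-- `U` is an epimorphic subrepresentation: `V_a(U_{ta}) = U_{ha}` for every arrow. -/
def IsEpiSub (U : ∀ x, Submodule K (Vx x)) : Prop :=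
  ∀ a : Q₁, (U (tl a)).map (Va a) = U (hd a)

/-- `N` is a coclosed subrepresentation: it is a subrepresentation and
`V_a⁻¹(N_{ha}) ⊆ N_{ta}` for every arrow. -/
def IsCoclosedSub (N : ∀ x, Submodule K (Vx x)) : Prop :=
  IsSubrep tl hd Vx Va N ∧ ∀ a : Q₁, (N (hd a)).comap (Va a) ≤ N (tl a)

/-- `Γ(V)`, the sum of all epimorphic subrepresentations. -/
def Gamma (x : Q₀) : Submodule K (Vx x) :=
  ⨆ U : {U : ∀ y, Submodule K (Vx y) // IsEpiSub tl hd Vx Va U}, U.1 x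

/-- `Δ(V)`, the intersection of all coclosed subrepresentations. -/
def Delta (x : Q₀) : Submodule K (Vx x) :=
  ⨅ N : {N : ∀ y, Submodule K (Vx y) // IsCoclosedSub tl hd Vx Va N}, N.1 x

lemma le_gamma {U : ∀ y, Submodule K (Vx y)} (hU : IsEpiSub tl hd Vx Va U) (x : Q₀) :
    U x ≤ Gamma tl hd Vx Va x :=
  le_iSup (fun (W : {U // IsEpiSub tl hd Vx Va U}) => W.1 x) ⟨U, hU⟩

lemma delta_le {N : ∀ y, Submodule K (Vx y)} (hN : IsCoclosedSub tl hd Vx Va N) (x : Q₀) :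
    Delta tl hd Vx Va x ≤ N x :=
  iInf_le (fun (W : {N // IsCoclosedSub tl hd Vx Va N}) => W.1 x) ⟨N, hN⟩

lemma gamma_epi : IsEpiSub tl hd Vx Va (Gamma tl hd Vx Va) := by
  intro a
  apply le_antisymm
  · rw [Gamma, Submodule.map_iSup]
    refine iSup_le fun U => ?_
    rw [U.2 a]
    exact le_gamma tl hd Vx Va U.2 (hd a)
  · refine iSup_le fun U => ?_
    rw [← U.2 a]
    exact Submodule.map_mono (le_gamma tl hd Vx Va U.2 (tl a))

lemma gamma_subrep : IsSubrep tl hd Vx Va (Gamma tl hd Vx Va) :=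
  fun a => le_of_eq (gamma_epi tl hd Vx Va a)

lemma delta_subrep : IsSubrep tl hd Vx Va (Delta tl hd Vx Va) := by
  intro a
  have : ∀ N : {N // IsCoclosedSub tl hd Vx Va N},
      (Delta tl hd Vx Va (tl a)).map (Va a) ≤ N.1 (hd a) :=
    fun N => le_trans (Submodule.map_mono (delta_le tl hd Vx Va N.2 (tl a))) (N.2.1 a)
  exact le_iInf this

/-- `Γ(V) + Δ(V)` pointwise. -/
abbrev GD (x : Q₀) : Submodule K (Vx x) := Gamma tl hd Vx Va x ⊔ Delta tl hd Vx Va x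

/-- `Δ(V)`, seen inside `Γ(V) + Δ(V)`. -/
abbrev rkfDen (x : Q₀) : Submodule K (GD tl hd Vx Va x) :=
  (Delta tl hd Vx Va x).comap (GD tl hd Vx Va x).subtype

/-- The vertex spaces `(Γ(V)_x + Δ(V)_x)/Δ(V)_x` of the global tensor functor. -/
abbrev rkfSpace (x : Q₀) : Type :=
  GD tl hd Vx Va x ⧸ rkfDen tl hd Vx Va x

lemma gd_mapsTo (a : Q₁) : ∀ v ∈ GD tl hd Vx Va (tl a), Va a v ∈ GD tl hd Vx Va (hd a) := by
  intro v hv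
  have : (GD tl hd Vx Va (tl a)).map (Va a) ≤ GD tl hd Vx Va (hd a) := by
    rw [Submodule.map_sup]
    exact sup_le_sup (gamma_subrep tl hd Vx Va a) (delta_subrep tl hd Vx Va a)
  exact this ⟨v, hv, rfl⟩

/-- The arrow maps of the global tensor functor, induced by the `V_a`. -/
def rkfMap (a : Q₁) : rkfSpace tl hd Vx Va (tl a) →ₗ[K] rkfSpace tl hd Vx Va (hd a) :=
  Submodule.liftQ _
    ((rkfDen tl hd Vx Va (hd a)).mkQ ∘ₗ (Va a).restrict (gd_mapsTo tl hd Vx Va a))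
    (by
      intro v hv
      simp only [LinearMap.mem_ker, LinearMap.comp_apply, Submodule.mkQ_apply,
        Submodule.Quotient.mk_eq_zero]
      have hv' : (v : Vx (tl a)) ∈ Delta tl hd Vx Va (tl a) := hv
      show (Va a) (v : Vx (tl a)) ∈ Delta tl hd Vx Va (hd a)
      exact delta_subrep tl hd Vx Va a ⟨(v : Vx (tl a)), hv', rfl⟩)

/-- Isomorphism of quiver representations. -/
def RepIso (Wx : Q₀ → Type) [∀ x, AddCommGroup (Wx x)] [∀ x, Module K (Wx x)]
    (Wa : ∀ a : Q₁, Wx (tl a) →ₗ[K] Wx (hd a)) : Prop :=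
  ∃ φ : ∀ x, Vx x ≃ₗ[K] Wx x, ∀ (a : Q₁) (v : Vx (tl a)), φ (hd a) (Va a v) = Wa a (φ (tl a) v)

end Defs

section Tree

variable {K : Type} [Field K]
variable {Q₀ Q₁ : Type} (tl hd : Q₁ → Q₀)
variable (Vx : Q₀ → Type) [∀ x, AddCommGroup (Vx x)] [∀ x, Module K (Vx x)]
variable (Va : ∀ a : Q₁, Vx (tl a) →ₗ[K] Vx (hd a))

/-- `Hom(𝟙, V)`: families `(v_x)` with `V_a(v_{ta}) = v_{ha}` for all arrows. -/
def limSub : Submodule K (∀ x, Vx x) where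
  carrier := {v | ∀ a : Q₁, Va a (v (tl a)) = v (hd a)}
  add_mem' := by
    intro u v hu hv a
    simp only [Pi.add_apply, map_add, hu a, hv a]
  zero_mem' := by
    intro a
    simp
  smul_mem' := by
    intro c v hv a
    simp only [Pi.smul_apply, map_smul, hv a]

/-- `Hom(V, 𝟙)`: families `(g_x)` of functionals with `g_{ha} ∘ V_a = g_{ta}` for all arrows. -/
def colimSub : Submodule K (∀ x, Module.Dual K (Vx x)) where
  carrier := {g | ∀ a : Q₁, (g (hd a)).comp (Va a) = g (tl a)}
  add_mem' := by
    intro u v hu hv a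
    simp only [Pi.add_apply, LinearMap.add_comp, hu a, hv a]
  zero_mem' := by
    intro a
    simp
  smul_mem' := by
    intro c v hv a
    simp only [Pi.smul_apply, LinearMap.smul_comp, hv a]

/-- The natural pairing map `η : Hom(𝟙,V) → Hom(V,𝟙)^*`, `η(v)(g) = g_{x₀}(v_{x₀})`. -/
def etaMap (x₀ : Q₀) : limSub tl hd Vx Va →ₗ[K] Module.Dual K (colimSub tl hd Vx Va) where
  toFun v :=
    { toFun := fun g => g.1 x₀ (v.1 x₀)
      map_add' := fun g g' => rfl
      map_smul' := fun c g => rfl }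
  map_add' := by
    intro u v
    ext g
    simp
  map_smul' := by
    intro c v
    ext g
    simp

end Tree

/-!
The finitely many arrows of a tree can be attached one at a time, each adding one new vertex, so a
family of relations along the arrows, total on both sides, has a section through any prescribed
point. Since `Γ(V)` is itself epimorphic, this says that the values at `x₀` of `Hom(𝟙, V)` fill out
`Γ(V)_{x₀}`. The annihilators `Δ(V)_x°` form the maximal epimorphic subrepresentation of
the dual representation of the opposite quiver, which is again a tree, so the values at `x₀` of
`Hom(V, 𝟙)` fill out `Δ(V)_{x₀}°`. Hence `η v = 0` exactly when `v_{x₀} ∈ Δ(V)_{x₀}`, and `η` has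
the same kernel as the surjection `Hom(𝟙, V) → (rkf V)_{x₀}`.
-/

lemma exists_rel_mem_notMem {α : Type*} {r : α → α → Prop} {s : Set α} {x y : α}
    (hxy : Relation.ReflTransGen r x y) (hx : x ∈ s) (hy : y ∉ s) :
    ∃ u ∈ s, ∃ v ∉ s, r u v := by
  induction hxy with
  | refl => exact absurd hx hy
  | @tail u v _ huv ih =>
    by_cases hu : u ∈ s
    · exact ⟨u, hu, v, hy, huv⟩
    · exact ih hu

section Trees

variable {Q₀ Q₁ : Type*} {tl hd : Q₁ → Q₀}

/-- The arrow `a` has endpoints `u` and `v`, in either direction. -/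
def Joins (tl hd : Q₁ → Q₀) (a : Q₁) (u v : Q₀) : Prop :=
  (tl a = u ∧ hd a = v) ∨ (hd a = u ∧ tl a = v)

/-- A finite quiver whose underlying graph is a tree, encoded as a connected quiver with one vertex
more than it has arrows. -/
structure IsTreeQuiver [Fintype Q₀] [Fintype Q₁] (tl hd : Q₁ → Q₀) : Prop where
  connected : ∀ x y : Q₀, Relation.ReflTransGen (fun u v => ∃ a : Q₁, Joins tl hd a u v) x y
  card_eq : Fintype.card Q₀ = Fintype.card Q₁ + 1

lemma IsTreeQuiver.op [Fintype Q₀] [Fintype Q₁] (hQ : IsTreeQuiver tl hd) :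
    IsTreeQuiver hd tl where
  connected x y :=
    Relation.ReflTransGen.mono (fun _ _ ⟨a, ha⟩ => ⟨a, ha.symm⟩) x y (hQ.connected x y)
  card_eq := hQ.card_eq

/-- Subtrees containing the vertex `x₀`, given by their vertices and their arrows: those obtained
from `x₀` by repeatedly attaching an arrow that has exactly one endpoint in the subtree. -/
inductive IsSubtree [DecidableEq Q₀] [DecidableEq Q₁] (tl hd : Q₁ → Q₀) (x₀ : Q₀) :
    Finset Q₀ → Finset Q₁ → Prop
  | root : IsSubtree tl hd x₀ {x₀} ∅
  | attach {S : Finset Q₀} {E : Finset Q₁} {a : Q₁} {u v : Q₀} (hSE : IsSubtree tl hd x₀ S E)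
      (ha : Joins tl hd a u v) (hu : u ∈ S) (hv : v ∉ S) :
      IsSubtree tl hd x₀ (insert v S) (insert a E)

namespace IsSubtree

variable [DecidableEq Q₀] [DecidableEq Q₁] {x₀ : Q₀} {S : Finset Q₀} {E : Finset Q₁}

lemma root_mem (h : IsSubtree tl hd x₀ S E) : x₀ ∈ S := by
  induction h with
  | root => exact Finset.mem_singleton_self x₀
  | attach _ _ _ _ ih => exact Finset.mem_insert_of_mem ih

lemma endpoints_mem (h : IsSubtree tl hd x₀ S E) {a : Q₁} (ha : a ∈ E) :
    tl a ∈ S ∧ hd a ∈ S := by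
  induction h with
  | root => simp at ha
  | attach _ hb hu _ ih =>
    rcases Finset.mem_insert.1 ha with rfl | ha
    · rcases hb with ⟨rfl, rfl⟩ | ⟨rfl, rfl⟩ <;> simp [hu]
    · exact (ih ha).imp Finset.mem_insert_of_mem Finset.mem_insert_of_mem

lemma notMem_of_joins (h : IsSubtree tl hd x₀ S E) {a : Q₁} {u v : Q₀}
    (ha : Joins tl hd a u v) (hv : v ∉ S) : a ∉ E := by
  intro haE
  rcases ha with ⟨-, rfl⟩ | ⟨-, rfl⟩
  · exact hv (h.endpoints_mem haE).2
  · exact hv (h.endpoints_mem haE).1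

lemma card_eq (h : IsSubtree tl hd x₀ S E) : S.card = E.card + 1 := by
  induction h with
  | root => simp
  | attach hSE ha _ hv ih =>
    rw [Finset.card_insert_of_notMem hv, Finset.card_insert_of_notMem (hSE.notMem_of_joins ha hv),
      ih]

lemma exists_univ [Fintype Q₀]
    (hconn : ∀ y, Relation.ReflTransGen (fun u v => ∃ a : Q₁, Joins tl hd a u v) x₀ y) :
    ∃ E, IsSubtree tl hd x₀ Finset.univ E := by
  obtain ⟨S, ⟨E, hSE⟩, hmax⟩ := exists_maximal_of_wellFoundedGT
    (fun S : Finset Q₀ => ∃ E, IsSubtree tl hd x₀ S E) ⟨{x₀}, ∅, root⟩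
  suffices hS : S = Finset.univ from ⟨E, hS ▸ hSE⟩
  refine Finset.eq_univ_iff_forall.2 fun y => by_contra fun hy => ?_
  obtain ⟨u, hu, v, hv, a, ha⟩ := exists_rel_mem_notMem (s := S) (hconn y) hSE.root_mem hy
  exact hv (hmax ⟨_, hSE.attach ha hu hv⟩ (Finset.subset_insert v S) (Finset.mem_insert_self v S))

lemma exists_section {X : Q₀ → Type*} [∀ x, Nonempty (X x)]
    {R : ∀ a : Q₁, X (tl a) → X (hd a) → Prop} (hR : ∀ a, Relator.BiTotal (R a))
    (h : IsSubtree tl hd x₀ S E) (p : X x₀) :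
    ∃ s : ∀ x, X x, s x₀ = p ∧ ∀ a ∈ E, R a (s (tl a)) (s (hd a)) := by
  induction h with
  | root => exact ⟨Function.update (fun _ => Classical.arbitrary _) x₀ p, by simp, by simp⟩
  | @attach S E a u v hSE ha hu hv ih =>
    obtain ⟨s, hs, hsE⟩ := ih
    have huv : u ≠ v := ne_of_mem_of_not_mem hu hv
    obtain ⟨q, hq⟩ : ∃ q : X v,
        R a (Function.update s v q (tl a)) (Function.update s v q (hd a)) := by
      rcases ha with ⟨rfl, rfl⟩ | ⟨rfl, rfl⟩
      · simpa only [Function.update_self, Function.update_of_ne huv] using (hR a).1 (s (tl a))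
      · simpa only [Function.update_self, Function.update_of_ne huv] using (hR a).2 (s (hd a))
    have update_eq {x : Q₀} (hx : x ∈ S) : Function.update s v q x = s x :=
      Function.update_of_ne (ne_of_mem_of_not_mem hx hv) q s
    refine ⟨Function.update s v q, (update_eq hSE.root_mem).trans hs, fun b hb => ?_⟩
    rcases Finset.mem_insert.1 hb with rfl | hb
    · exact hq
    · rw [update_eq (hSE.endpoints_mem hb).1, update_eq (hSE.endpoints_mem hb).2]
      exact hsE b hb

end IsSubtree

lemma IsTreeQuiver.exists_section [Fintype Q₀] [Fintype Q₁] (hQ : IsTreeQuiver tl hd)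
    {X : Q₀ → Type*} [∀ x, Nonempty (X x)] {R : ∀ a : Q₁, X (tl a) → X (hd a) → Prop}
    (hR : ∀ a, Relator.BiTotal (R a)) {x₀ : Q₀} (p : X x₀) :
    ∃ s : ∀ x, X x, s x₀ = p ∧ ∀ a, R a (s (tl a)) (s (hd a)) := by
  classical
  obtain ⟨E, hE⟩ := IsSubtree.exists_univ (hQ.connected x₀)
  have hE_univ : E = Finset.univ := by
    rw [← Finset.card_eq_iff_eq_univ, ← Nat.add_right_cancel_iff (n := 1), ← hE.card_eq,
      Finset.card_univ, hQ.card_eq]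
  obtain ⟨s, hs, hsE⟩ := hE.exists_section hR p
  exact ⟨s, hs, fun a => hsE a (hE_univ ▸ Finset.mem_univ a)⟩

end Trees

lemma map_dualMap_dualAnnihilator {K V W : Type*} [Field K] [AddCommGroup V] [Module K V]
    [AddCommGroup W] [Module K W] (φ : V →ₗ[K] W) (N : Submodule K W) :
    N.dualAnnihilator.map φ.dualMap = (N.comap φ).dualAnnihilator := by
  calc N.dualAnnihilator.map φ.dualMap
      = (LinearMap.range N.mkQ.dualMap).map φ.dualMap := by rw [Submodule.range_dualMap_mkQ_eq]
    _ = LinearMap.range (N.mkQ ∘ₗ φ).dualMap := by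
      rw [← LinearMap.range_comp, LinearMap.dualMap_comp_dualMap]
    _ = (N.comap φ).dualAnnihilator := by
      rw [LinearMap.range_dualMap_eq_dualAnnihilator_ker, LinearMap.ker_comp, Submodule.ker_mkQ]

section GlobalTensor

variable {K : Type} [Field K] {Q₀ Q₁ : Type} (tl hd : Q₁ → Q₀)
variable (Vx : Q₀ → Type) [∀ x, AddCommGroup (Vx x)] [∀ x, Module K (Vx x)]
variable (Va : ∀ a : Q₁, Vx (tl a) →ₗ[K] Vx (hd a))

lemma delta_comap_eq (a : Q₁) :
    (Delta tl hd Vx Va (hd a)).comap (Va a) = Delta tl hd Vx Va (tl a) :=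
  le_antisymm
    (le_iInf fun N => (Submodule.comap_mono (delta_le tl hd Vx Va N.2 (hd a))).trans (N.2.2 a))
    (Submodule.map_le_iff_le_comap.1 (delta_subrep tl hd Vx Va a))

variable {tl hd Vx Va} in
lemma IsEpiSub.isCoclosedSub_dualCoannihilator {U : ∀ x, Submodule K (Module.Dual K (Vx x))}
    (hU : IsEpiSub hd tl (fun x => Module.Dual K (Vx x)) (fun a => (Va a).dualMap) U) :
    IsCoclosedSub tl hd Vx Va (fun x => (U x).dualCoannihilator) := by
  refine ⟨fun a => ?_, fun a v hv => ?_⟩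
  · rintro _ ⟨v, hv, rfl⟩
    refine (Submodule.mem_dualCoannihilator _).2 fun f hf => ?_
    exact (Submodule.mem_dualCoannihilator v).1 hv _ ((hU a).le ⟨f, hf, rfl⟩)
  · refine (Submodule.mem_dualCoannihilator v).2 fun f hf => ?_
    obtain ⟨g, hg, rfl⟩ := (hU a).ge hf
    exact (Submodule.mem_dualCoannihilator _).1 hv g hg

lemma gamma_dual (x : Q₀) :
    Gamma hd tl (fun x => Module.Dual K (Vx x)) (fun a => (Va a).dualMap) x =
      (Delta tl hd Vx Va x).dualAnnihilator := by
  apply le_antisymm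
  · refine iSup_le fun U => ?_
    exact Submodule.le_dualAnnihilator_iff_le_dualCoannihilator.2
      (delta_le tl hd Vx Va U.2.isCoclosedSub_dualCoannihilator x)
  · refine le_gamma hd tl _ _ (U := fun x => (Delta tl hd Vx Va x).dualAnnihilator)
      (fun a => ?_) x
    rw [map_dualMap_dualAnnihilator, delta_comap_eq]

lemma limSub_apply_mem_gamma {v : ∀ x, Vx x} (hv : v ∈ limSub tl hd Vx Va) (x : Q₀) :
    v x ∈ Gamma tl hd Vx Va x := by
  refine le_gamma tl hd Vx Va (U := fun y => Submodule.span K {v y}) (fun a => ?_) x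
    (Submodule.mem_span_singleton_self (v x))
  rw [Submodule.map_span, Set.image_singleton, hv a]

lemma colimSub_eq_limSub_dual :
    colimSub tl hd Vx Va = limSub hd tl (fun x => Module.Dual K (Vx x)) (fun a => (Va a).dualMap) :=
  rfl

/-- The linear map `Hom(𝟙, V) → (rkf V)_x` sending `v` to the class of `v_x`. -/
def limToRkf (x : Q₀) : limSub tl hd Vx Va →ₗ[K] rkfSpace tl hd Vx Va x :=
  (rkfDen tl hd Vx Va x).mkQ ∘ₗ
    (LinearMap.proj x ∘ₗ (limSub tl hd Vx Va).subtype).codRestrict (GD tl hd Vx Va x)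
      fun v => Submodule.mem_sup_left (limSub_apply_mem_gamma tl hd Vx Va v.2 x)

lemma mem_ker_limToRkf {x : Q₀} {v : limSub tl hd Vx Va} :
    v ∈ LinearMap.ker (limToRkf tl hd Vx Va x) ↔ v.1 x ∈ Delta tl hd Vx Va x :=
  Submodule.Quotient.mk_eq_zero (rkfDen tl hd Vx Va x)

variable {tl hd} [Fintype Q₀] [Fintype Q₁]

namespace IsTreeQuiver

lemma map_proj_limSub (hQ : IsTreeQuiver tl hd) (x₀ : Q₀) :
    (limSub tl hd Vx Va).map (LinearMap.proj x₀) = Gamma tl hd Vx Va x₀ := by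
  apply le_antisymm
  · rintro _ ⟨v, hv, rfl⟩
    exact limSub_apply_mem_gamma tl hd Vx Va hv x₀
  · intro w hw
    have biTotal (a : Q₁) : Relator.BiTotal fun (p : Gamma tl hd Vx Va (tl a))
        (q : Gamma tl hd Vx Va (hd a)) => Va a p = q :=
      ⟨fun p => ⟨⟨Va a p, gamma_subrep tl hd Vx Va a ⟨p, p.2, rfl⟩⟩, rfl⟩, fun q => by
        obtain ⟨p, hp, hpq⟩ := (gamma_epi tl hd Vx Va a).ge q.2
        exact ⟨⟨p, hp⟩, hpq⟩⟩
    obtain ⟨s, hs, hsection⟩ :=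
      hQ.exists_section (X := fun x => Gamma tl hd Vx Va x) biTotal ⟨w, hw⟩
    exact ⟨fun x => s x, hsection, congrArg Subtype.val hs⟩

lemma map_proj_colimSub (hQ : IsTreeQuiver tl hd) (x₀ : Q₀) :
    (colimSub tl hd Vx Va).map (LinearMap.proj x₀) = (Delta tl hd Vx Va x₀).dualAnnihilator := by
  rw [colimSub_eq_limSub_dual,
    hQ.op.map_proj_limSub (fun x => Module.Dual K (Vx x)) (fun a => (Va a).dualMap), gamma_dual]

lemma limToRkf_surjective (hQ : IsTreeQuiver tl hd) (x₀ : Q₀) :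
    Function.Surjective (limToRkf tl hd Vx Va x₀) := by
  intro z
  obtain ⟨⟨_, hw⟩, rfl⟩ := Submodule.mkQ_surjective _ z
  obtain ⟨u, hu, t, ht, rfl⟩ := Submodule.mem_sup.1 hw
  rw [← hQ.map_proj_limSub Vx Va] at hu
  obtain ⟨v, hv, rfl⟩ := hu
  refine ⟨⟨v, hv⟩, (Submodule.Quotient.eq _).2 ?_⟩
  change v x₀ - (v x₀ + t) ∈ Delta tl hd Vx Va x₀
  simpa using ht

lemma ker_etaMap (hQ : IsTreeQuiver tl hd) (x₀ : Q₀) :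
    LinearMap.ker (etaMap tl hd Vx Va x₀) = LinearMap.ker (limToRkf tl hd Vx Va x₀) := by
  ext v
  calc v ∈ LinearMap.ker (etaMap tl hd Vx Va x₀)
      ↔ ∀ g ∈ colimSub tl hd Vx Va, g x₀ (v.1 x₀) = 0 := by
        rw [LinearMap.mem_ker, LinearMap.ext_iff, Subtype.forall]; rfl
    _ ↔ ∀ f ∈ (colimSub tl hd Vx Va).map (LinearMap.proj x₀), f (v.1 x₀) = 0 := by simp
    _ ↔ v.1 x₀ ∈ Delta tl hd Vx Va x₀ := by
        rw [hQ.map_proj_colimSub Vx Va, Subspace.forall_mem_dualAnnihilator_apply_eq_zero_iff]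
    _ ↔ v ∈ LinearMap.ker (limToRkf tl hd Vx Va x₀) := (mem_ker_limToRkf tl hd Vx Va).symm

end IsTreeQuiver

end GlobalTensor

theorem stmt_10_general {K : Type} [Field K] {Q₀ Q₁ : Type} [Fintype Q₀] [Fintype Q₁]
    {tl hd : Q₁ → Q₀} (hQ : IsTreeQuiver tl hd)
    (Vx : Q₀ → Type) [∀ x, AddCommGroup (Vx x)] [∀ x, Module K (Vx x)]
    (Va : ∀ a : Q₁, Vx (tl a) →ₗ[K] Vx (hd a)) (x₀ : Q₀) :
    (etaMap tl hd Vx Va x₀).rank = Module.rank K (rkfSpace tl hd Vx Va x₀) :=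
  let η := etaMap tl hd Vx Va x₀
  let π := limToRkf tl hd Vx Va x₀
  calc η.rank
    _ = Module.rank K (limSub tl hd Vx Va ⧸ LinearMap.ker η) := η.quotKerEquivRange.rank_eq.symm
    _ = Module.rank K (limSub tl hd Vx Va ⧸ LinearMap.ker π) := by rw [hQ.ker_etaMap Vx Va]
    _ = Module.rank K (rkfSpace tl hd Vx Va x₀) :=
      (π.quotKerEquivOfSurjective (hQ.limToRkf_surjective Vx Va x₀)).rank_eq

/-- on a tree quiver (connected, with one fewer arrow than vertices),
the rank of the natural pairing map `η : Hom(𝟙,V) → Hom(V,𝟙)^*` equals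
`dim_K (rkf V)_{x₀}` (for any base vertex `x₀`). -/
theorem stmt_10 {K : Type} [Field K] {Q₀ Q₁ : Type} [Fintype Q₀] [Fintype Q₁]
    (tl hd : Q₁ → Q₀)
    (hconn : ∀ x y : Q₀, Relation.ReflTransGen
      (fun u v => ∃ a : Q₁, (tl a = u ∧ hd a = v) ∨ (hd a = u ∧ tl a = v)) x y)
    (htree : Fintype.card Q₀ = Fintype.card Q₁ + 1)
    (Vx : Q₀ → Type) [∀ x, AddCommGroup (Vx x)] [∀ x, Module K (Vx x)]
    [∀ x, FiniteDimensional K (Vx x)]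
    (Va : ∀ a : Q₁, Vx (tl a) →ₗ[K] Vx (hd a)) :
    ∀ x₀ : Q₀,
      Module.finrank K (LinearMap.range (etaMap tl hd Vx Va x₀))
        = Module.finrank K (rkfSpace tl hd Vx Va x₀) :=
  fun x₀ => congrArg Cardinal.toNat (stmt_10_general ⟨hconn, htree⟩ Vx Va x₀)
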